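/- Suppose the density f_δ of δ is of bounded variation and the characteristic function f_δ^Ft(t) is nonvanishing and, for all sufficiently large positive t, monotone decreasing in t. If, for some C > 0, there exists a sequence of estimators F̂ (measurable functionals of the data X_1,…,X_n) such that sup over F_W ∈ 𝒢_2(C) of ∫_{-∞}^{∞} E{F̂(x) − F_W(x)}^2 dx = O(n^{-1}) as n → ∞, then ∫_1^∞ t^{-2} f_δ^Ft(t)^{-2} dt < ∞. -/

import Mathlib

/-!
An error density `f` of bounded variation excludes the rate `n⁻¹` altogether, so the hypotheses are
contradictory and the conclusion holds vacuously. This matches the heuristics: bounded variation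
forces `f^Ft(t) = O(1/t)`, hence a divergent integral in the conclusion; the divergence reappears
below as that of the harmonic series.

Perturb the uniform law on `(0, a]`, `a = C`, by adding `∑ₖ ηₖ cos (π(k+1)y/a)` to its density. All
these laws have `E|W| ≤ a`, and their distribution functions are `y/a` plus sine polynomials with
coefficients `ηₖ a / ((k+1)π)`. Convolved with `f`, the cosine of frequency `k + 1` on `(0, a]` has
`L¹` norm at most `a² V / (k+1)`, `V` being the total variation of `f` (`L1_cos_conv`): the cosine has mean zero
on cells of length `a/(k+1)`, and the `L¹` modulus of continuity of `f` at `h` is at most `V h`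
(`bv_shift_L1`). The same convolution is also dominated pointwise by a multiple of the unperturbed
observation density, so a change of `ηₖ` by `ε` lowers the Hellinger affinity of one observation by
`O(ε²/(k+1))` only (`affinity_pow`). Sign flips `ηₖ = ±tₙ √(k+1)` with `tₙ² ≍ 1/n` therefore cannot be
detected from `n` observations, and the two-point bound `two_point` forces a squared error of
order `(√(k+1)/(k+1))²/n = 1/((k+1)n)` in the `k`-th sine coefficient of the distribution function.

Bessel's inequality for the sines (`bessel_sin`) and averaging over all sign patterns (`assouad`) add
these errors up: a risk of at most `D/n` gives `∑_{k<N} 1/(k+1) ≤ 32π²(V+1)D` for every `N`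
(`harmonic_le`), which contradicts the divergence of the harmonic series.
-/

open MeasureTheory Filter Topology
open scoped ENNReal ProbabilityTheory

noncomputable section

/-- Characteristic function of a measure on `ℝ`. -/
def charFn (μ : Measure ℝ) (t : ℝ) : ℂ :=
  ∫ x, Complex.exp (Complex.I * (t * x)) ∂μ

/-- `μ` is a probability measure whose characteristic function is the real-valued,
everywhere equal to `f`. -/
def realCharFn (μ : Measure ℝ) (f : ℝ → ℝ) : Prop :=
  IsProbabilityMeasure μ ∧ ∀ t, charFn μ t = (f t : ℂ)

/-- Cumulative distribution function of a measure on `ℝ`. -/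
def cdfF (μ : Measure ℝ) (x : ℝ) : ℝ :=
  (μ (Set.Iic x)).toReal

/-- Law of the observed sample `X_1, …, X_n`, where `X_j = W_j + δ_j`, the `W_j`
are i.i.d. with law `μW` and the `δ_j` are i.i.d. with law `μδ`, independent of
the `W_j`'s. -/
def sampleLaw (μW μδ : Measure ℝ) (n : ℕ) : Measure (Fin n → ℝ) :=
  Measure.pi fun _ => (μW.prod μδ).map fun p => p.1 + p.2

/-- `E |x| ^ p ≤ C` for the measure `μ`. -/
def absMomBdd (μ : Measure ℝ) (p C : ℝ) : Prop :=
  ∫⁻ x, ENNReal.ofReal (|x| ^ p) ∂μ ≤ ENNReal.ofReal C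

/-- `μ` has a (Lebesgue) density bounded by `C`. -/
def hasDensityBdd (μ : Measure ℝ) (C : ℝ) : Prop :=
  ∃ f : ℝ → ℝ, Measurable f ∧ (∀ x, 0 ≤ f x) ∧ (∀ x, f x ≤ C) ∧
    μ = volume.withDensity fun x => ENNReal.ofReal (f x)

/-- Fourier transform of the polynomial kernel: `K^Ft(t) = (1 - t^r)^s 1(|t| ≤ 1)`. -/
def polyKFt (r s : ℕ) (t : ℝ) : ℝ :=
  if |t| ≤ 1 then (1 - t ^ r) ^ s else 0

/-- The function `L₁(u|h) = 1/2 + (2π)⁻¹ ∫ (sin(tu)/t) K^Ft(ht)/f_δ^Ft(t) dt`,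
where `fδ` denotes the (real-valued) characteristic function of the error and
`KFt` the Fourier transform of the kernel. -/
def L1fun (fδ KFt : ℝ → ℝ) (h u : ℝ) : ℝ :=
  1 / 2 + (2 * Real.pi)⁻¹ * ∫ t : ℝ, Real.sin (t * u) / t * (KFt (h * t) / fδ t)

/-- The function `L₁(u|0) = 1/2 + (2π)⁻¹ ∫ (sin(tu)/t) f_δ^Ft(t)⁻¹ dt`. -/
def L1zero (fδ : ℝ → ℝ) (u : ℝ) : ℝ :=
  1 / 2 + (2 * Real.pi)⁻¹ * ∫ t : ℝ, Real.sin (t * u) / (t * fδ t)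

/-- The deconvolution distribution estimator `F̂_W(x|h)`. -/
def FhatD (fδ KFt : ℝ → ℝ) (h : ℝ) {n : ℕ} (X : Fin n → ℝ) (x : ℝ) : ℝ :=
  (n : ℝ)⁻¹ * ∑ j, L1fun fδ KFt h (x - X j)

/-- The deconvolution distribution estimator `F̂_W(x|0)` at bandwidth `0`. -/
def Fhat0 (fδ : ℝ → ℝ) {n : ℕ} (X : Fin n → ℝ) (x : ℝ) : ℝ :=
  (n : ℝ)⁻¹ * ∑ j, L1zero fδ (x - X j)

/-- Mean squared error `E (T(X₁,…,Xₙ) - θ)²` of an estimator `T` of `θ`, the data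
being an i.i.d. sample from the convolution of `μW` and `μδ`. -/
def riskSq (μW μδ : Measure ℝ) (n : ℕ) (T : (Fin n → ℝ) → ℝ) (θ : ℝ) : ℝ≥0∞ :=
  ∫⁻ X, ENNReal.ofReal ((T X - θ) ^ 2) ∂sampleLaw μW μδ n

/-- The class `ℱ₁(C)` of error distributions. -/
def memF1 (C : ℝ) (μ : Measure ℝ) (f : ℝ → ℝ) : Prop :=
  realCharFn μ f ∧ (∀ t, 0 < f t) ∧
    ∫⁻ t in Set.Ioi (0 : ℝ), ENNReal.ofReal (t⁻¹ ^ 2 * ((f t)⁻¹ - 1) ^ 2) ≤ ENNReal.ofReal C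

/-- The class `ℱ₂(C)`: members of `ℱ₁(C)` with `E|δ| ≤ C`. -/
def memF2 (C : ℝ) (μ : Measure ℝ) (f : ℝ → ℝ) : Prop :=
  memF1 C μ f ∧ absMomBdd μ 1 C

/-- The class `ℱ₃(α, C)` of error distributions. -/
def memF3 (α C : ℝ) (μ : Measure ℝ) (f : ℝ → ℝ) : Prop :=
  realCharFn μ f ∧ (∀ t, 0 < f t) ∧ (∀ t, (1 + |t|) ^ (-α) ≤ C * f t) ∧
    hasDensityBdd μ C ∧ absMomBdd μ 1 C

/-- The class `ℱ₄(C, q)` of error distributions (for `2k < q < 2k+2`). -/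
def memF4 (C q : ℝ) (k : ℕ) (μ : Measure ℝ) (f : ℝ → ℝ) : Prop :=
  realCharFn μ f ∧ (∀ t, 0 < f t) ∧ absMomBdd μ (4 * (k + 1)) C ∧
    (∫⁻ t in Set.Ioc (0 : ℝ) 1, ENNReal.ofReal (t ^ (-(2 * (q + 1))) *
        (f t - ∑ j ∈ Finset.range (k + 1),
          (-1 : ℝ) ^ j * t ^ (2 * j) / (2 * j).factorial * ∫ x, x ^ (2 * j) ∂μ) ^ 2)) +
      (∫⁻ t in Set.Ioi (1 : ℝ), ENNReal.ofReal (t ^ (-(2 * (q + 1))) * ((f t)⁻¹) ^ 2)) ≤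
      ENNReal.ofReal C

/-- The class `ℱ₅(α, C)`: members of `ℱ₃(α, C)` with `E(δ^{4(k+1)}) ≤ C`. -/
def memF5 (α C : ℝ) (k : ℕ) (μ : Measure ℝ) (f : ℝ → ℝ) : Prop :=
  memF3 α C μ f ∧ absMomBdd μ (4 * (k + 1)) C

/-- The class `ℱ₆(α, C)`: members of `ℱ₃(α, C)` whose characteristic function has its
first two derivatives bounded analogously. -/
def memF6 (α C : ℝ) (μ : Measure ℝ) (f : ℝ → ℝ) : Prop :=
  memF3 α C μ f ∧ ∀ j ≤ 2, ∀ t, |iteratedDeriv j f t| ≤ C * (1 + |t|) ^ (-α - j)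

/-- The class `𝒢₁(C)`: distributions with a density bounded by `C`. -/
def memG1 (C : ℝ) (μ : Measure ℝ) : Prop :=
  IsProbabilityMeasure μ ∧ hasDensityBdd μ C

/-- The class `𝒢₂(C)`: distributions with `E|W| ≤ C`. -/
def memG2 (C : ℝ) (μ : Measure ℝ) : Prop :=
  IsProbabilityMeasure μ ∧ absMomBdd μ 1 C

/-- The class `𝒢₃(β, C)` of target distributions. -/
def memG3 (β C : ℝ) (μ : Measure ℝ) : Prop :=
  IsProbabilityMeasure μ ∧ (∀ t, ‖charFn μ t‖ ≤ C * (1 + |t|) ^ (-β)) ∧ absMomBdd μ 1 C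

/-- `k_β`, the least integer strictly exceeding `β ≥ 0`. -/
def kbeta (β : ℝ) : ℕ := ⌊β⌋₊ + 1

/-- The class `𝒢₄(β, C)` of target distributions. -/
def memG4 (β C : ℝ) (μ : Measure ℝ) : Prop :=
  memG3 β C μ ∧ ∀ x₀ > (0 : ℝ), ∀ k : ℕ, β < k → ∀ u > (0 : ℝ), ∀ x : ℝ, x₀ < |x| →
    (1 + u) ^ (β - k) *
        ‖∫ t in (0 : ℝ)..u, Complex.exp (Complex.I * (t * x)) * (t : ℂ) ^ k * charFn μ t‖ ≤
      C * k / ((kbeta β - β) * x₀)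

/-- The class `𝒢₅(C, k)` of target distributions. -/
def memG5 (C : ℝ) (k : ℕ) (μ : Measure ℝ) : Prop :=
  IsProbabilityMeasure μ ∧ hasDensityBdd μ C ∧ absMomBdd μ (4 * (k + 1)) C

/-- The class `𝒢₆(β, C)` of target distributions. -/
def memG6 (β C : ℝ) (k : ℕ) (μ : Measure ℝ) : Prop :=
  IsProbabilityMeasure μ ∧ absMomBdd μ (4 * (k + 1)) C ∧
    ∀ j ≤ 2 * k + 2, ∀ t, ‖iteratedDeriv j (charFn μ) t‖ ≤ C * (1 + |t|) ^ (-β - j)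

/-- The logarithmic factor `ℓ_h`. -/
def ellh (α h : ℝ) : ℝ := if α = 1 / 2 then 1 + |Real.log h| else 1

/-- The logarithmic factor `ℓ = ℓ(n)`. -/
def ellN (α : ℝ) (n : ℕ) : ℝ := if α = 1 / 2 then Real.log n else 1

/-- The deconvolution density estimator `f̂_W(u|h)`. -/
def fhatDen (fδ KFt : ℝ → ℝ) (h : ℝ) {n : ℕ} (X : Fin n → ℝ) (u : ℝ) : ℝ :=
  (n : ℝ)⁻¹ * ∑ j, (2 * Real.pi)⁻¹ * ∫ t : ℝ, Real.cos (t * (u - X j)) * (KFt (h * t) / fδ t)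

/-- The absolute-moment estimator `ν̂_q(h) = ∫ |u|^q dF̂_W(u|h)`. -/
def nuHat (fδ KFt : ℝ → ℝ) (h q : ℝ) {n : ℕ} (X : Fin n → ℝ) : ℝ :=
  ∫ u : ℝ, |u| ^ q * fhatDen fδ KFt h X u

/-- The absolute moment `ν_q = E|W|^q`. -/
def nuq (μ : Measure ℝ) (q : ℝ) : ℝ := ∫ x, |x| ^ q ∂μ

/-- The `u`-th quantile `ξ_u = F⁻¹(u)`. -/
def quantileF (μ : Measure ℝ) (u : ℝ) : ℝ := sInf {y | u ≤ cdfF μ y}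

/-- The quantile estimator `ξ̂_u(h) = sup{y : F̂_W(y|h) ≤ u}`. -/
def xiHatD (fδ KFt : ℝ → ℝ) (h : ℝ) {n : ℕ} (X : Fin n → ℝ) (u : ℝ) : ℝ :=
  sSup {y | FhatD fδ KFt h X y ≤ u}

/-- The class `𝒢_u^*(C, g)` of target distributions, regular near the `u`-th quantile. -/
def memGstar (u : ℝ) (g : ℝ → ℝ) (C : ℝ) (μ : Measure ℝ) : Prop :=
  ∃ fW : ℝ → ℝ, Measurable fW ∧ (∀ x, 0 ≤ fW x) ∧
    μ = volume.withDensity (fun x => ENNReal.ofReal (fW x)) ∧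
    (∀ x ∈ Set.Icc (quantileF μ u - C⁻¹) (quantileF μ u + C⁻¹), 0 < fW x) ∧
    fW (quantileF μ u) + (fW (quantileF μ u))⁻¹ ≤ C ∧
    ∀ η ∈ Set.Icc (0 : ℝ) 1, ∀ x ∈ Set.Icc (quantileF μ u - C⁻¹) (quantileF μ u + C⁻¹),
      ∀ y ∈ Set.Icc (quantileF μ u - C⁻¹) (quantileF μ u + C⁻¹),
        |x - y| ≤ η → |fW x - fW y| ≤ g η

/-- The class `𝒢₇(β, C, u, g) = 𝒢₃(β, C) ∩ 𝒢_u^*(C, g)`. -/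
def memG7 (β C u : ℝ) (g : ℝ → ℝ) (μ : Measure ℝ) : Prop :=
  memG3 β C μ ∧ memGstar u g C μ

/-- The class `𝒢₈(β, C, u, g)`: members of `𝒢₄(β, C) ∩ 𝒢_u^*(C, g)` with `|ξ_u| > C⁻¹`. -/
def memG8 (β C u : ℝ) (g : ℝ → ℝ) (μ : Measure ℝ) : Prop :=
  memG4 β C μ ∧ memGstar u g C μ ∧ C⁻¹ < |quantileF μ u|

/-! ### Hellinger affinity and the two-point bound -/

/-- No sign condition on `f`: only its positive part enters the right-hand side. -/
lemma ofReal_integral_le {α : Type*} [MeasurableSpace α] {μ : Measure α} {f : α → ℝ}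
    (hf : Integrable f μ) : ENNReal.ofReal (∫ x, f x ∂μ) ≤ ∫⁻ x, ENNReal.ofReal (f x) ∂μ := by
  calc ENNReal.ofReal (∫ x, f x ∂μ) ≤ ENNReal.ofReal (∫ x, max (f x) 0 ∂μ) :=
        ENNReal.ofReal_le_ofReal (integral_mono hf hf.pos_part fun x => le_max_left _ _)
    _ = ∫⁻ x, ENNReal.ofReal (max (f x) 0) ∂μ :=
        ofReal_integral_eq_lintegral_ofReal hf.pos_part (.of_forall fun x => le_max_right _ _)
    _ = _ := by simp

lemma pi_withDensity_ofReal {n : ℕ} {p : ℝ → ℝ} (hp : ∀ x, 0 ≤ p x) (hi : Integrable p) :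
    Measure.pi (fun _ : Fin n => volume.withDensity fun x => ENNReal.ofReal (p x)) =
      volume.withDensity fun X : Fin n → ℝ => ENNReal.ofReal (∏ i, p (X i)) := by
  have : IsFiniteMeasure (volume.withDensity fun x => ENNReal.ofReal (p x)) :=
    isFiniteMeasure_withDensity_ofReal hi.2
  refine (Measure.pi_eq fun s hs => ?_)
  rw [withDensity_apply _ (MeasurableSet.univ_pi hs)]
  simp_rw [withDensity_apply _ (hs _)]
  rw [← lintegral_indicator (MeasurableSet.univ_pi hs)]
  have h1 : ∀ X : Fin n → ℝ, (Set.univ.pi s).indicator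
      (fun X => ENNReal.ofReal (∏ i, p (X i))) X =
      ENNReal.ofReal (∏ i, (s i).indicator p (X i)) := by
    intro X
    by_cases hX : X ∈ Set.univ.pi s
    · rw [Set.indicator_of_mem hX]
      congr 1
      refine Finset.prod_congr rfl fun i _ => ?_
      rw [Set.indicator_of_mem (hX i trivial)]
    · rw [Set.indicator_of_notMem hX]
      simp only [Set.mem_pi, not_forall] at hX
      obtain ⟨i, _, hX⟩ := hX
      rw [Finset.prod_eq_zero (Finset.mem_univ i) (Set.indicator_of_notMem hX _)]
      simp
  have h2 : ∀ i x, 0 ≤ (s i).indicator p x := fun i x => Set.indicator_nonneg (fun _ _ => hp _) _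
  simp_rw [h1]
  have h3 : ∀ i, Integrable ((s i).indicator p) := fun i => hi.indicator (hs i)
  rw [← ofReal_integral_eq_lintegral_ofReal (μ := volume) (Integrable.fintype_prod h3)
    (.of_forall fun X => Finset.prod_nonneg fun i _ => h2 i _),
    integral_fintype_prod_volume_eq_prod (fun i => (s i).indicator p),
    ENNReal.ofReal_prod_of_nonneg (fun i _ => integral_nonneg (h2 i))]
  refine Finset.prod_congr rfl fun i _ => ?_
  rw [integral_indicator (hs i), ofReal_integral_eq_lintegral_ofReal hi.integrableOn (.of_forall hp)]

/-- Two-point (Le Cam) bound: if the Hellinger affinity of two `n`-fold product laws is at least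
`1/2`, no estimator has small squared error at both parameters. It integrates the pointwise
inequality `(T-b)² P + (T-b')² Q ≥ (b-b')² √(PQ) / 2 - (b-b')² (P+Q) / 16` between the joint
densities `P` and `Q`. -/
lemma two_point {n : ℕ} {p q : ℝ → ℝ} (hp : ∀ x, 0 ≤ p x) (hq : ∀ x, 0 ≤ q x)
    (hpm : Measurable p) (hqm : Measurable q)
    (hpi : Integrable p) (hqi : Integrable q) (hp1 : ∫ x, p x = 1) (hq1 : ∫ x, q x = 1)
    (haff : 1 / 2 ≤ (∫ x, √(p x * q x)) ^ n)
    {T : (Fin n → ℝ) → ℝ} (hT : Measurable T) (b b' : ℝ) :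
    ENNReal.ofReal ((b - b') ^ 2 / 8) ≤
      (∫⁻ X, ENNReal.ofReal ((T X - b) ^ 2)
        ∂Measure.pi (fun _ : Fin n => volume.withDensity fun x => ENNReal.ofReal (p x))) +
      ∫⁻ X, ENNReal.ofReal ((T X - b') ^ 2)
        ∂Measure.pi (fun _ : Fin n => volume.withDensity fun x => ENNReal.ofReal (q x)) := by
  rw [pi_withDensity_ofReal hp hpi, pi_withDensity_ofReal hq hqi]
  set P : (Fin n → ℝ) → ℝ := fun X => ∏ i, p (X i) with hP
  set Q : (Fin n → ℝ) → ℝ := fun X => ∏ i, q (X i) with hQ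
  have hP0 : ∀ X, 0 ≤ P X := fun X => Finset.prod_nonneg fun i _ => hp _
  have hQ0 : ∀ X, 0 ≤ Q X := fun X => Finset.prod_nonneg fun i _ => hq _
  have hPm : Measurable P := by fun_prop
  have hQm : Measurable Q := by fun_prop
  rw [lintegral_withDensity_eq_lintegral_mul _ (by fun_prop) (by fun_prop),
    lintegral_withDensity_eq_lintegral_mul _ (by fun_prop) (by fun_prop)]
  have hPi : Integrable P := Integrable.fintype_prod (fun _ => hpi)
  have hQi : Integrable Q := Integrable.fintype_prod (fun _ => hqi)
  have hP1 : ∫ X, P X = 1 := by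
    rw [hP, integral_fintype_prod_volume_eq_prod (fun _ => p)]; simp [hp1]
  have hQ1 : ∫ X, Q X = 1 := by
    rw [hQ, integral_fintype_prod_volume_eq_prod (fun _ => q)]; simp [hq1]
  have hA : ∫ X, √(P X) * √(Q X) = (∫ x, √(p x * q x)) ^ n := by
    have : ∀ X, √(P X) * √(Q X) = ∏ i, √(p (X i) * q (X i)) := fun X => by
      rw [← Real.sqrt_mul (hP0 X), ← Finset.prod_mul_distrib,
        Real.sqrt_prod _ (fun i _ => mul_nonneg (hp _) (hq _))]
    simp_rw [this]
    rw [integral_fintype_prod_volume_eq_prod (fun _ x => √(p x * q x))]; simp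
  have hAi : Integrable fun X => √(P X) * √(Q X) := by
    refine (hPi.add hQi).mono' (by fun_prop) (.of_forall fun X => ?_)
    rw [Real.norm_of_nonneg (by positivity)]
    have := two_mul_le_add_sq (√(P X)) (√(Q X))
    rw [Real.sq_sqrt (hP0 X), Real.sq_sqrt (hQ0 X)] at this
    have : 0 ≤ √(P X) * √(Q X) := by positivity
    simp only [Pi.add_apply]
    linarith
  have hSi : Integrable fun X => P X + Q X := hPi.add hQi
  have key : ∀ X, ENNReal.ofReal ((b - b') ^ 2 / 2 * (√(P X) * √(Q X)) -
      (b - b') ^ 2 / 16 * (P X + Q X)) ≤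
      ENNReal.ofReal (P X) * ENNReal.ofReal ((T X - b) ^ 2) +
      ENNReal.ofReal (Q X) * ENNReal.ofReal ((T X - b') ^ 2) := by
    intro X
    rw [← ENNReal.ofReal_mul (hP0 X), ← ENNReal.ofReal_mul (hQ0 X),
      ← ENNReal.ofReal_add (mul_nonneg (hP0 X) (sq_nonneg _)) (mul_nonneg (hQ0 X) (sq_nonneg _))]
    refine ENNReal.ofReal_le_ofReal ?_
    nth_rewrite 2 [← Real.sq_sqrt (hP0 X)]
    nth_rewrite 2 [← Real.sq_sqrt (hQ0 X)]
    nth_rewrite 3 [← Real.sq_sqrt (hP0 X)]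
    nth_rewrite 3 [← Real.sq_sqrt (hQ0 X)]
    -- the difference of the two sides is a sum of two squares in `u = √P` and `v = √Q`
    generalize √(P X) = u
    generalize √(Q X) = v
    nlinarith [sq_nonneg ((b' - T X) * v - (b' - b) * u / 4),
      sq_nonneg ((T X - b) * u - (b' - b) * v / 4)]
  calc ENNReal.ofReal ((b - b') ^ 2 / 8)
      ≤ ENNReal.ofReal (∫ X, ((b - b') ^ 2 / 2 * (√(P X) * √(Q X)) -
          (b - b') ^ 2 / 16 * (P X + Q X))) := by
        refine ENNReal.ofReal_le_ofReal ?_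
        rw [integral_sub (hAi.const_mul _) (hSi.const_mul _), integral_const_mul,
          integral_const_mul, integral_add hPi hQi, hP1, hQ1, hA]
        nlinarith [sq_nonneg (b - b')]
    _ ≤ ∫⁻ X, ENNReal.ofReal ((b - b') ^ 2 / 2 * (√(P X) * √(Q X)) -
          (b - b') ^ 2 / 16 * (P X + Q X)) := ofReal_integral_le
          ((hAi.const_mul _).sub (hSi.const_mul _))
    _ ≤ _ := by
        rw [← lintegral_add_left (by fun_prop)]
        exact lintegral_mono key

/-- An `L¹` bound `L` together with a relative pointwise bound `κ` keeps the affinity of the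
`n`-fold products away from `0` as soon as `n κ L ≤ 1`: the pointwise bound gives
`√(pq) ≥ (p+q)/2 - κ|p-q|/2`, hence a one-observation affinity of at least `1 - κL/2`, and Bernoulli's
inequality does the rest. -/
lemma affinity_pow {n : ℕ} {p q : ℝ → ℝ} (hp : ∀ x, 0 ≤ p x) (hq : ∀ x, 0 ≤ q x)
    (hpi : Integrable p) (hqi : Integrable q) (hp1 : ∫ x, p x = 1) (hq1 : ∫ x, q x = 1)
    {κ L : ℝ} (hκ : 0 ≤ κ) (hL : ∫ x, |p x - q x| ≤ L)
    (hκb : ∀ x, |p x - q x| ≤ κ * (p x + q x))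
    (hn : n * (κ * L) ≤ 1) : 1 / 2 ≤ (∫ x, √(p x * q x)) ^ n := by
  rcases Nat.eq_zero_or_pos n with rfl | hn0
  · norm_num
  have hdi : Integrable fun x => |p x - q x| := (hpi.sub hqi).abs
  have hsi : Integrable fun x => p x + q x := hpi.add hqi
  have h1 : 1 - κ * L / 2 ≤ ∫ x, √(p x * q x) := by
    calc 1 - κ * L / 2 ≤ 1 - κ / 2 * ∫ x, |p x - q x| := by nlinarith
      _ = ∫ x, ((p x + q x) / 2 - κ / 2 * |p x - q x|) := by
        rw [integral_sub (hsi.div_const 2) (hdi.const_mul _), integral_const_mul,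
          integral_div, integral_add hpi hqi, hp1, hq1]
        norm_num
      _ ≤ _ := by
        refine integral_mono ((hsi.div_const 2).sub (hdi.const_mul _)) ?_ fun x => ?_
        · refine (hpi.add hqi).mono'
            (hpi.1.mul hqi.1).aemeasurable.sqrt.aestronglyMeasurable (.of_forall fun x => ?_)
          rw [Real.norm_of_nonneg (by positivity)]
          simp only [Pi.add_apply]
          rw [Real.sqrt_le_left (add_nonneg (hp x) (hq x))]
          nlinarith [mul_nonneg (hp x) (hq x), sq_nonneg (p x), sq_nonneg (q x)]
        · have hd := abs_nonneg (p x - q x)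
          have hd2 := sq_abs (p x - q x)
          have hs := hκb x
          have hp' := hp x
          have hq' := hq x
          rcases le_total ((p x + q x) / 2 - κ / 2 * |p x - q x|) 0 with h | h
          · exact h.trans (Real.sqrt_nonneg _)
          · refine Real.le_sqrt_of_sq_le ?_
            -- with `s = p + q`, `d = |p - q|`, `u = s - κ d`: `s² - u² ≥ κ d s ≥ d²`
            generalize |p x - q x| = d at *
            nlinarith [mul_le_mul_of_nonneg_left hs hd, mul_nonneg (mul_nonneg hκ hd) h]
  have h0 : 0 ≤ κ * L := mul_nonneg hκ ((integral_nonneg fun x => abs_nonneg _).trans hL)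
  have hn1 : (1 : ℝ) ≤ n := by exact_mod_cast hn0
  have h2 := one_add_mul_le_pow (a := -(κ * L / 2)) (by nlinarith) n
  calc (1 : ℝ) / 2 ≤ 1 + n * (-(κ * L / 2)) := by linarith
    _ ≤ (1 - κ * L / 2) ^ n := by rw [sub_eq_add_neg]; exact h2
    _ ≤ _ := by
      refine pow_le_pow_left₀ ?_ h1 n
      nlinarith

/-! ### Functions of bounded variation against high-frequency cosines -/

lemma measurable_of_bv {f : ℝ → ℝ} (hf : BoundedVariationOn f Set.univ) : Measurable f := by
  obtain ⟨p, q, hp, hq, rfl⟩ :=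
    hf.locallyBoundedVariationOn.exists_monotoneOn_sub_monotoneOn
  exact (monotoneOn_univ.1 hp).measurable.sub (monotoneOn_univ.1 hq).measurable

lemma bv_max_zero {f : ℝ → ℝ} (hf : BoundedVariationOn f Set.univ) :
    BoundedVariationOn (fun x => max (f x) 0) Set.univ := by
  have h : LipschitzWith 1 fun x : ℝ => max x 0 := LipschitzWith.id.max_const 0
  exact h.lipschitzOnWith.comp_boundedVariationOn (Set.mapsTo_univ _ _) hf

/-- The increments of `f` over all cells of a grid of mesh `h` add up to at most the variation. -/
lemma tsum_grid_le_eVariationOn (f : ℝ → ℝ) {h : ℝ} (h0 : 0 ≤ h) (x : ℝ) :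
    ∑' n : ℤ, ‖f (x + n * h + h) - f (x + n * h)‖ₑ ≤ eVariationOn f Set.univ := by
  rw [ENNReal.tsum_eq_iSup_sum]
  refine iSup_le fun s => ?_
  obtain ⟨m, hm⟩ : ∃ m : ℕ, ∀ n ∈ s, -(m : ℤ) ≤ n ∧ n < m := by
    refine ⟨(∑ n ∈ s, n.natAbs) + 1, fun n hn => ?_⟩
    have := Finset.single_le_sum (f := fun n : ℤ => n.natAbs) (fun _ _ => Nat.zero_le _) hn
    omega
  have hsub : s ⊆ (Finset.range (2 * m)).image (fun i : ℕ => (i : ℤ) - m) := by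
    intro n hn
    obtain ⟨h1, h2⟩ := hm n hn
    exact Finset.mem_image.2 ⟨(n + m).toNat, Finset.mem_range.2 (by omega), by omega⟩
  refine (Finset.sum_le_sum_of_subset hsub).trans ?_
  rw [Finset.sum_image (fun i _ j _ hij => by lia)]
  have hmono : Monotone fun i : ℕ => x + ((i : ℝ) - m) * h := by
    intro i j hij
    have : (i : ℝ) ≤ j := by exact_mod_cast hij
    simp only
    gcongr
  refine le_trans (le_of_eq ?_) (eVariationOn.sum_le (f := f) (n := 2 * m) hmono
    (fun _ => Set.mem_univ _))
  refine Finset.sum_congr rfl fun i _ => ?_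
  rw [edist_eq_enorm_sub]
  push_cast
  congr 3
  ring

/-- The `L¹` modulus of continuity of a function of bounded variation is at most its total
variation times the shift: slice the line into cells of length `h`; along each coset of `hℤ` the
increments add up to at most the variation. -/
lemma bv_shift_L1 {f : ℝ → ℝ} (hf : BoundedVariationOn f Set.univ) {h : ℝ} (h0 : 0 ≤ h) :
    ∫⁻ x, ‖f (x + h) - f x‖ₑ ≤ ENNReal.ofReal h * eVariationOn f Set.univ := by
  rcases h0.eq_or_lt with rfl | h0
  · simp
  have hfm := measurable_of_bv hf
  calc ∫⁻ x, ‖f (x + h) - f x‖ₑ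
      = ∫⁻ x in ⋃ n : ℤ, Set.Ioc (n • h) ((n + 1) • h), ‖f (x + h) - f x‖ₑ := by
        rw [iUnion_Ioc_zsmul h0, Measure.restrict_univ]
    _ ≤ ∑' n : ℤ, ∫⁻ x in Set.Ioc (n • h) ((n + 1) • h), ‖f (x + h) - f x‖ₑ :=
        lintegral_iUnion_le _ _
    _ = ∑' n : ℤ, ∫⁻ x in Set.Ioc 0 h, ‖f (x + n * h + h) - f (x + n * h)‖ₑ := by
        congr 1; ext n
        rw [← (measurePreserving_add_right volume ((n : ℝ) * h)).setLIntegral_comp_preimage_emb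
          (measurableEmbedding_addRight _)]
        congr 2
        ext x
        simp only [zsmul_eq_mul, Set.mem_preimage, Set.mem_Ioc]
        push_cast
        constructor <;> rintro ⟨h1, h2⟩ <;> constructor <;> linarith
    _ = ∫⁻ x in Set.Ioc 0 h, ∑' n : ℤ, ‖f (x + n * h + h) - f (x + n * h)‖ₑ :=
        (lintegral_tsum fun n => by fun_prop).symm
    _ ≤ ∫⁻ x in Set.Ioc 0 h, eVariationOn f Set.univ :=
        lintegral_mono fun x => tsum_grid_le_eVariationOn f h0.le x
    _ = _ := by simp [mul_comm]

lemma setIntegral_cos_cell {τ : ℝ} (hτ : 0 < τ) (j : ℕ) :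
    ∫ y in (j * τ)..((j + 1 : ℕ) * τ), Real.cos (Real.pi * y / τ) = 0 := by
  have h1 : ∀ y, Real.pi * y / τ = (Real.pi / τ) * y := fun y => by ring
  have hne : Real.pi / τ ≠ 0 := by positivity
  simp_rw [h1]
  rw [intervalIntegral.integral_comp_mul_left _ hne, integral_cos]
  have h2 : ∀ i : ℕ, Real.pi / τ * (i * τ) = i * Real.pi := fun i => by field_simp
  rw [h2, h2, Real.sin_nat_mul_pi, Real.sin_nat_mul_pi]
  simp

/-- A function of the cell `(jτ, (j+1)τ]` containing the variable is orthogonal to `cos (πy/τ)`,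
whose mean over each cell vanishes. -/
lemma integral_cos_mul_step {τ : ℝ} (hτ : 0 < τ) (k : ℕ) (g : ℝ → ℝ) :
    IntegrableOn (fun y => Real.cos (Real.pi * y / τ) * g (τ * ⌈y / τ⌉)) (Set.Ioc 0 (k * τ)) ∧
    ∫ y in Set.Ioc 0 (k * τ), Real.cos (Real.pi * y / τ) * g (τ * ⌈y / τ⌉) = 0 := by
  set F : ℝ → ℝ := fun y => Real.cos (Real.pi * y / τ) * g (τ * ⌈y / τ⌉) with hF
  have hc : Continuous fun y => Real.cos (Real.pi * y / τ) := by fun_prop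
  have hle : ∀ j : ℕ, (j : ℝ) * τ ≤ (j + 1 : ℕ) * τ := fun j => by
    push_cast; nlinarith
  have hcell : ∀ j : ℕ, ∀ y ∈ Set.Ioc ((j : ℝ) * τ) ((j + 1 : ℕ) * τ),
      F y = Real.cos (Real.pi * y / τ) * g (τ * (j + 1)) := by
    intro j y hy
    have : ⌈y / τ⌉ = (j : ℤ) + 1 := by
      rw [Int.ceil_eq_iff]
      push_cast
      have := hy.2
      push_cast at this
      exact ⟨by rw [lt_div_iff₀ hτ]; simpa using hy.1, by rwa [div_le_iff₀ hτ]⟩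
    simp only [hF, this]
    push_cast
    rfl
  have hint : ∀ j : ℕ, IntervalIntegrable F volume (j * τ) ((j + 1 : ℕ) * τ) := by
    intro j
    rw [intervalIntegrable_iff_integrableOn_Ioc_of_le (hle j)]
    refine IntegrableOn.congr_fun ?_ (fun y hy => (hcell j y hy).symm) measurableSet_Ioc
    exact ((hc.mul continuous_const).integrableOn_Icc).mono_set Set.Ioc_subset_Icc_self
  have hzero : ∀ j : ℕ, ∫ y in (j * τ)..((j + 1 : ℕ) * τ), F y = 0 := by
    intro j
    rw [intervalIntegral.integral_of_le (hle j),
      setIntegral_congr_fun measurableSet_Ioc (hcell j), integral_mul_const,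
      ← intervalIntegral.integral_of_le (hle j), setIntegral_cos_cell hτ, zero_mul]
  have hk : (0 : ℝ) ≤ k * τ := by positivity
  have h1 := IntervalIntegrable.trans_iterate (a := fun j : ℕ => (j : ℝ) * τ) (n := k)
    (fun j _ => hint j)
  have h2 := intervalIntegral.sum_integral_adjacent_intervals (a := fun j : ℕ => (j : ℝ) * τ)
    (n := k) (fun j _ => hint j)
  simp only [Nat.cast_zero, zero_mul] at h1 h2
  refine ⟨(intervalIntegrable_iff_integrableOn_Ioc_of_le hk).1 h1, ?_⟩
  rw [← intervalIntegral.integral_of_le hk, ← h2]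
  exact Finset.sum_eq_zero fun j _ => hzero j

lemma integrableOn_cos_mul_comp {f : ℝ → ℝ} (hfi : Integrable f) (c : ℝ → ℝ)
    (hc : Continuous c) {M : ℝ} (hcb : ∀ y, |c y| ≤ M) (x : ℝ) (s : Set ℝ) :
    IntegrableOn (fun y => c y * f (x - y)) s := by
  have h : Integrable fun y => f (x - y) := hfi.comp_sub_left x
  exact (h.bdd_mul hc.aestronglyMeasurable (.of_forall fun y => hcb y)).integrableOn

/-- High-frequency cosines are damped by convolution with a function of bounded variation: since
the cosine has mean zero over each cell of length `τ`, `f (x - y)` may be replaced by its difference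
with the value `f (x - τ⌈y/τ⌉)` at the right end of the cell, and the `L¹` modulus of `f` applies. -/
lemma L1_cos_conv {f : ℝ → ℝ} (hfi : Integrable f) (hf : BoundedVariationOn f Set.univ)
    {τ : ℝ} (hτ : 0 < τ) (k : ℕ) :
    ∫⁻ x, ‖∫ y in Set.Ioc 0 (k * τ), Real.cos (Real.pi * y / τ) * f (x - y)‖ₑ ≤
      ENNReal.ofReal (k * τ) * (ENNReal.ofReal τ * eVariationOn f Set.univ) := by
  have hfm := measurable_of_bv hf
  have hmeas : Measurable fun z : ℝ × ℝ =>
      ‖f (z.1 - z.2) - f (z.1 - τ * ⌈z.2 / τ⌉)‖ₑ := by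
    have : Measurable fun z : ℝ × ℝ => (⌈z.2 / τ⌉ : ℤ) := Int.measurable_ceil.comp (by fun_prop)
    have : Measurable fun z : ℝ × ℝ => ((⌈z.2 / τ⌉ : ℤ) : ℝ) :=
      (measurable_of_countable (fun n : ℤ => (n : ℝ))).comp this
    fun_prop
  calc ∫⁻ x, ‖∫ y in Set.Ioc 0 (k * τ), Real.cos (Real.pi * y / τ) * f (x - y)‖ₑ
      ≤ ∫⁻ x, ∫⁻ y in Set.Ioc 0 (k * τ), ‖f (x - y) - f (x - τ * ⌈y / τ⌉)‖ₑ := by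
        refine lintegral_mono fun x => ?_
        obtain ⟨h1, h2⟩ := integral_cos_mul_step hτ k (fun z => f (x - z))
        have h3 := integrableOn_cos_mul_comp hfi (fun y => Real.cos (Real.pi * y / τ))
          (by fun_prop) (fun y => Real.abs_cos_le_one _) x (Set.Ioc 0 (k * τ))
        have h4 : ∫ y in Set.Ioc 0 (k * τ), Real.cos (Real.pi * y / τ) * f (x - y) =
            ∫ y in Set.Ioc 0 (k * τ), Real.cos (Real.pi * y / τ) *
              (f (x - y) - f (x - τ * ⌈y / τ⌉)) := by
          simp_rw [mul_sub]
          rw [integral_sub h3 h1, h2, sub_zero]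
        rw [h4]
        refine (enorm_integral_le_lintegral_enorm _).trans (lintegral_mono fun y => ?_)
        rw [enorm_mul]
        refine mul_le_of_le_one_left zero_le ?_
        rw [Real.enorm_eq_ofReal_abs]
        exact ENNReal.ofReal_le_one.2 (Real.abs_cos_le_one _)
    _ = ∫⁻ y in Set.Ioc 0 (k * τ), ∫⁻ x, ‖f (x - y) - f (x - τ * ⌈y / τ⌉)‖ₑ :=
        lintegral_lintegral_swap hmeas.aemeasurable
    _ ≤ ∫⁻ y in Set.Ioc 0 (k * τ), ENNReal.ofReal τ * eVariationOn f Set.univ := by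
        refine lintegral_mono fun y => ?_
        have hc1 := Int.ceil_lt_add_one (y / τ)
        have hc2 := Int.le_ceil (y / τ)
        have e : τ * (y / τ) = y := by field_simp
        have h0 : 0 ≤ τ * ⌈y / τ⌉ - y := by nlinarith
        have h1 : τ * ⌈y / τ⌉ - y ≤ τ := by nlinarith
        calc ∫⁻ x, ‖f (x - y) - f (x - τ * ⌈y / τ⌉)‖ₑ
            = ∫⁻ x, ‖f (x + (τ * ⌈y / τ⌉ - y)) - f x‖ₑ := by
              rw [← lintegral_sub_right_eq_self
                (fun x => ‖f (x + (τ * ⌈y / τ⌉ - y)) - f x‖ₑ) (τ * ⌈y / τ⌉)]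
              refine lintegral_congr fun x => ?_
              congr 3
              ring
          _ ≤ _ := (bv_shift_L1 hf h0).trans (by gcongr)
    _ = _ := by simp [mul_comm]

/-! ### The sine system on an interval -/

lemma integral_cos_nat_eq_zero {a : ℝ} (ha : 0 < a) {m : ℤ} (hm : m ≠ 0) :
    ∫ y in (0 : ℝ)..a, Real.cos (m * (Real.pi * y / a)) = 0 := by
  have h1 : ∀ y, m * (Real.pi * y / a) = (m * Real.pi / a) * y := fun y => by ring
  have hm' : (m : ℝ) ≠ 0 := by exact_mod_cast hm
  have hne : m * Real.pi / a ≠ 0 := by positivity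
  simp_rw [h1]
  rw [intervalIntegral.integral_comp_mul_left _ hne, integral_cos]
  have h2 : m * Real.pi / a * a = m * Real.pi := by field_simp
  rw [h2, Real.sin_int_mul_pi]
  simp

/-- Orthogonality of the sines `sin (π k y / a)`, `k ≥ 1`, on `(0, a]`. -/
lemma integral_sin_mul_sin {a : ℝ} (ha : 0 < a) (j k : ℕ) :
    ∫ y in Set.Ioc 0 a, Real.sin ((j + 1) * (Real.pi * y / a)) *
      Real.sin ((k + 1) * (Real.pi * y / a)) = if j = k then a / 2 else 0 := by
  rw [← intervalIntegral.integral_of_le ha.le]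
  have h1 : ∀ y, Real.sin ((j + 1) * (Real.pi * y / a)) * Real.sin ((k + 1) * (Real.pi * y / a)) =
      (Real.cos (((j - k : ℤ) : ℝ) * (Real.pi * y / a)) -
        Real.cos (((j + k + 2 : ℤ) : ℝ) * (Real.pi * y / a))) / 2 := by
    intro y
    push_cast
    rw [show ((j : ℝ) - k) * (Real.pi * y / a) =
        (j + 1) * (Real.pi * y / a) - (k + 1) * (Real.pi * y / a) by ring,
      show ((j : ℝ) + k + 2) * (Real.pi * y / a) =
        (j + 1) * (Real.pi * y / a) + (k + 1) * (Real.pi * y / a) by ring,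
      Real.cos_sub, Real.cos_add]
    ring
  have hi : ∀ m : ℝ, IntervalIntegrable (fun y => Real.cos (m * (Real.pi * y / a))) volume 0 a :=
    fun m => Continuous.intervalIntegrable (by fun_prop) _ _
  simp_rw [h1]
  rw [intervalIntegral.integral_div, intervalIntegral.integral_sub (hi _) (hi _),
    integral_cos_nat_eq_zero ha (m := (j + k + 2 : ℤ)) (by omega)]
  split_ifs with h
  · subst h; simp
  · rw [integral_cos_nat_eq_zero ha (m := (j - k : ℤ)) (by omega)]; simp

/-- Bessel's inequality for the sine system on `(0, a]`. -/
lemma bessel_sin {a : ℝ} (ha : 0 < a) (N : ℕ) {g : ℝ → ℝ}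
    (hg : AEStronglyMeasurable g (volume.restrict (Set.Ioc 0 a)))
    (hg2 : Integrable (fun y => g y ^ 2) (volume.restrict (Set.Ioc 0 a))) :
    ∑ k : Fin N, a / 2 * (2 / a * ∫ y in Set.Ioc 0 a,
      g y * Real.sin ((k + 1) * (Real.pi * y / a))) ^ 2 ≤ ∫ y in Set.Ioc 0 a, g y ^ 2 := by
  set μ := volume.restrict (Set.Ioc 0 a)
  have hgi : Integrable g μ := by
    have : MemLp g 2 μ := (memLp_two_iff_integrable_sq hg).2 hg2
    exact this.integrable (by norm_num)
  set s : Fin N → ℝ → ℝ := fun k y => Real.sin ((k + 1) * (Real.pi * y / a)) with hs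
  have hsc : ∀ k, Continuous (s k) := fun k => by simp only [hs]; fun_prop
  have hgs : ∀ k, Integrable (fun y => g y * s k y) μ := fun k =>
    hgi.mul_bdd (c := 1) (hsc k).aestronglyMeasurable
      (.of_forall fun y => Real.abs_sin_le_one _)
  set c : Fin N → ℝ := fun k => 2 / a * ∫ y, g y * s k y ∂μ with hc
  have hss : ∀ j k, Integrable (fun y => s j y * s k y) μ := fun j k =>
    (((hsc j).mul (hsc k)).integrableOn_Icc).mono_set Set.Ioc_subset_Icc_self
  have horth : ∀ j k, ∫ y, s j y * s k y ∂μ = if j = k then a / 2 else 0 := by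
    intro j k
    have := integral_sin_mul_sin ha (j : ℕ) (k : ℕ)
    simp only [hs]
    rw [this]
    simp [Fin.ext_iff]
  have hexp : ∀ y, (g y - ∑ k, c k * s k y) ^ 2 =
      g y ^ 2 - ∑ k, 2 * c k * (g y * s k y) + ∑ j, ∑ k, c j * c k * (s j y * s k y) := by
    intro y
    have e1 : ∑ k, 2 * c k * (g y * s k y) = 2 * g y * ∑ k, c k * s k y := by
      rw [Finset.mul_sum]; exact Finset.sum_congr rfl fun k _ => by ring
    have e2 : ∑ j, ∑ k, c j * c k * (s j y * s k y) = (∑ k, c k * s k y) * ∑ k, c k * s k y := by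
      rw [Finset.sum_mul_sum]
      exact Finset.sum_congr rfl fun j _ => Finset.sum_congr rfl fun k _ => by ring
    rw [e1, e2]; ring
  have h0 : 0 ≤ ∫ y, (g y - ∑ k, c k * s k y) ^ 2 ∂μ := integral_nonneg fun y => sq_nonneg _
  simp_rw [hexp] at h0
  have i1 : Integrable (fun y => ∑ k, 2 * c k * (g y * s k y)) μ :=
    integrable_finsetSum _ fun k _ => (hgs k).const_mul _
  have i2 : ∀ j, Integrable (fun y => ∑ k, c j * c k * (s j y * s k y)) μ := fun j =>
    integrable_finsetSum _ fun k _ => (hss j k).const_mul _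
  have i3 : Integrable (fun y => g y ^ 2 - ∑ k, 2 * c k * (g y * s k y)) μ := hg2.sub i1
  rw [integral_add i3 (integrable_finsetSum _ fun j _ => i2 j),
    integral_sub hg2 i1, integral_finsetSum _ (fun k _ => (hgs k).const_mul _),
    integral_finsetSum _ (fun j _ => i2 j)] at h0
  simp_rw [integral_finsetSum _ (fun k _ => (hss _ k).const_mul _), integral_const_mul,
    horth] at h0
  simp only [mul_ite, mul_zero, Finset.sum_ite_eq, Finset.mem_univ, if_true] at h0
  have e3 : ∑ k, 2 * c k * ∫ y, g y * s k y ∂μ = ∑ k, a * c k ^ 2 := by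
    refine Finset.sum_congr rfl fun k _ => ?_
    have : ∫ y, g y * s k y ∂μ = a / 2 * c k := by simp only [hc]; field_simp
    rw [this]; ring
  rw [e3] at h0
  have e4 : ∑ k, c k * c k * (a / 2) = ∑ k, a / 2 * c k ^ 2 :=
    Finset.sum_congr rfl fun k _ => by ring
  have e5 : ∑ k, a * c k ^ 2 = ∑ k, a / 2 * c k ^ 2 + ∑ k, a / 2 * c k ^ 2 := by
    rw [← Finset.sum_add_distrib]; exact Finset.sum_congr rfl fun k _ => by ring
  change ∑ k, a / 2 * c k ^ 2 ≤ _
  linarith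

/-! ### Perturbed uniform laws and the density of one observation -/

/-- The perturbed uniform density `1/a + ∑ₖ ηₖ cos (π (k+1) y / a)`, used only for `y ∈ (0, a]`.
The hypothesis `∑ₖ |ηₖ| ≤ 1/(2a)` of the lemmas below keeps it above `1/(2a)`. -/
def trigDen (a : ℝ) {N : ℕ} (η : Fin N → ℝ) (y : ℝ) : ℝ :=
  1 / a + ∑ k, η k * Real.cos ((k + 1) * (Real.pi * y / a))

/-- The law on `(0, a]` with density `trigDen a η`. -/
def trigLaw (a : ℝ) {N : ℕ} (η : Fin N → ℝ) : Measure ℝ :=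
  volume.withDensity fun y => (Set.Ioc 0 a).indicator (fun y => ENNReal.ofReal (trigDen a η y)) y

/-- The density of `W + δ` when `W` has law `trigLaw a η` and `δ` has density `f`. -/
def obsDen (f : ℝ → ℝ) (a : ℝ) {N : ℕ} (η : Fin N → ℝ) (x : ℝ) : ℝ :=
  ∫ y in Set.Ioc 0 a, trigDen a η y * f (x - y)

lemma continuous_trigDen (a : ℝ) {N : ℕ} (η : Fin N → ℝ) : Continuous (trigDen a η) := by
  unfold trigDen; fun_prop

section bounds

lemma abs_sum_cos_le {a : ℝ} {N : ℕ} {η : Fin N → ℝ} (hη : ∑ k, |η k| ≤ 1 / (2 * a)) (y : ℝ) :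
    |∑ k, η k * Real.cos ((k + 1) * (Real.pi * y / a))| ≤ 1 / (2 * a) := by
  refine (Finset.abs_sum_le_sum_abs _ _).trans (le_trans (Finset.sum_le_sum fun k _ => ?_) hη)
  rw [abs_mul]
  exact mul_le_of_le_one_right (abs_nonneg _) (Real.abs_cos_le_one _)

lemma trigDen_lower {a : ℝ} {N : ℕ} {η : Fin N → ℝ} (hη : ∑ k, |η k| ≤ 1 / (2 * a)) (y : ℝ) :
    1 / (2 * a) ≤ trigDen a η y := by
  have h := (abs_le.1 (abs_sum_cos_le hη y)).1
  have : 1 / a = 1 / (2 * a) + 1 / (2 * a) := by rw [← add_div, one_div, mul_comm 2 a]; ring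
  unfold trigDen
  linarith

lemma trigDen_pos {a : ℝ} (ha : 0 < a) {N : ℕ} {η : Fin N → ℝ} (hη : ∑ k, |η k| ≤ 1 / (2 * a))
    (y : ℝ) : 0 < trigDen a η y :=
  lt_of_lt_of_le (by positivity) (trigDen_lower hη y)

lemma abs_trigDen_le {a : ℝ} (ha : 0 < a) {N : ℕ} {η : Fin N → ℝ}
    (hη : ∑ k, |η k| ≤ 1 / (2 * a)) (y : ℝ) : |trigDen a η y| ≤ 1 / a + 1 / (2 * a) := by
  refine (abs_add_le _ _).trans (add_le_add (le_of_eq (abs_of_pos (by positivity))) ?_)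
  exact abs_sum_cos_le hη y

end bounds

lemma integral_trigDen {a : ℝ} (ha : 0 < a) {N : ℕ} (η : Fin N → ℝ) {x : ℝ} (hx : 0 ≤ x) :
    ∫ y in Set.Ioc 0 x, trigDen a η y =
      x / a + ∑ k : Fin N, η k * (a / ((k + 1) * Real.pi)) *
        Real.sin ((k + 1) * (Real.pi * x / a)) := by
  rw [← intervalIntegral.integral_of_le hx]
  unfold trigDen
  have hc : ∀ k : Fin N, IntervalIntegrable
      (fun y => η k * Real.cos ((k + 1) * (Real.pi * y / a))) volume 0 x :=
    fun k => Continuous.intervalIntegrable (by fun_prop) _ _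
  rw [intervalIntegral.integral_add (by simp)
    (Continuous.intervalIntegrable (by fun_prop) _ _),
    intervalIntegral.integral_finsetSum fun k _ => hc k]
  congr 1
  · simp [div_eq_mul_inv]
  · refine Finset.sum_congr rfl fun k _ => ?_
    have hne : ((k : ℝ) + 1) * Real.pi / a ≠ 0 := by positivity
    have h1 : ∀ y : ℝ, ((k : ℝ) + 1) * (Real.pi * y / a) = ((k + 1) * Real.pi / a) * y :=
      fun y => by ring
    simp_rw [h1]
    rw [intervalIntegral.integral_const_mul, intervalIntegral.integral_comp_mul_left _ hne,
      integral_cos]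
    simp only [mul_zero, Real.sin_zero, sub_zero, smul_eq_mul, inv_div]
    ring

lemma trigLaw_apply (a : ℝ) {N : ℕ} (η : Fin N → ℝ) (s : Set ℝ) (hs : MeasurableSet s) :
    trigLaw a η s = ∫⁻ y in Set.Ioc 0 a ∩ s, ENNReal.ofReal (trigDen a η y) := by
  rw [trigLaw, withDensity_apply _ hs, lintegral_indicator measurableSet_Ioc,
    Measure.restrict_restrict measurableSet_Ioc]

lemma lintegral_trigDen {a : ℝ} (ha : 0 < a) {N : ℕ} {η : Fin N → ℝ}
    (hη : ∑ k, |η k| ≤ 1 / (2 * a)) {x : ℝ} :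
    ∫⁻ y in Set.Ioc 0 x, ENNReal.ofReal (trigDen a η y) =
      ENNReal.ofReal (∫ y in Set.Ioc 0 x, trigDen a η y) := by
  rw [ofReal_integral_eq_lintegral_ofReal]
  · exact ((continuous_trigDen a η).integrableOn_Icc).mono_set Set.Ioc_subset_Icc_self
  · exact .of_forall fun y => (trigDen_pos ha hη y).le

/-- The distribution function is perturbed by a sine polynomial, whose terms are orthogonal on
`(0, a]`. -/
lemma cdfF_trigLaw {a : ℝ} (ha : 0 < a) {N : ℕ} {η : Fin N → ℝ}
    (hη : ∑ k, |η k| ≤ 1 / (2 * a)) {x : ℝ} (hx : x ∈ Set.Ioc 0 a) :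
    cdfF (trigLaw a η) x = x / a + ∑ k : Fin N, η k * (a / ((k + 1) * Real.pi)) *
        Real.sin ((k + 1) * (Real.pi * x / a)) := by
  have : Set.Ioc 0 a ∩ Set.Iic x = Set.Ioc 0 x := by
    ext y; simp only [Set.mem_inter_iff, Set.mem_Ioc, Set.mem_Iic]
    exact ⟨fun h => ⟨h.1.1, h.2⟩, fun h => ⟨⟨h.1, h.2.trans hx.2⟩, h.2⟩⟩
  rw [cdfF, trigLaw_apply _ _ _ measurableSet_Iic, this, lintegral_trigDen ha hη,
    ENNReal.toReal_ofReal (integral_nonneg fun y => (trigDen_pos ha hη y).le),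
    integral_trigDen ha η hx.1.le]

lemma isProbabilityMeasure_trigLaw {a : ℝ} (ha : 0 < a) {N : ℕ} {η : Fin N → ℝ}
    (hη : ∑ k, |η k| ≤ 1 / (2 * a)) : IsProbabilityMeasure (trigLaw a η) := by
  refine ⟨?_⟩
  rw [trigLaw_apply _ _ _ MeasurableSet.univ, Set.inter_univ, lintegral_trigDen ha hη,
    integral_trigDen ha η ha.le]
  have : ∀ k : Fin N, Real.sin (((k : ℝ) + 1) * (Real.pi * a / a)) = 0 := fun k => by
    rw [mul_div_cancel_right₀ _ ha.ne']
    exact_mod_cast Real.sin_nat_mul_pi (k + 1)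
  rw [Finset.sum_eq_zero fun k _ => by rw [this, mul_zero]]
  simp [ha.ne']

lemma memG2_trigLaw {a : ℝ} (ha : 0 < a) {N : ℕ} {η : Fin N → ℝ}
    (hη : ∑ k, |η k| ≤ 1 / (2 * a)) : memG2 a (trigLaw a η) := by
  have := isProbabilityMeasure_trigLaw ha hη
  refine ⟨this, ?_⟩
  unfold absMomBdd
  have hae : ∀ᵐ x ∂trigLaw a η, x ∈ Set.Ioc 0 a := by
    rw [ae_iff, ← Set.compl_def, trigLaw_apply _ _ _ measurableSet_Ioc.compl]
    simp
  calc ∫⁻ x, ENNReal.ofReal (|x| ^ (1 : ℝ)) ∂trigLaw a η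
      ≤ ∫⁻ x, ENNReal.ofReal a ∂trigLaw a η := by
        refine lintegral_mono_ae (hae.mono fun x hx => ENNReal.ofReal_le_ofReal ?_)
        rw [Real.rpow_one, abs_of_pos hx.1]
        exact hx.2
    _ = _ := by simp

section observation

variable {f : ℝ → ℝ} {a : ℝ} {N : ℕ}

lemma integrableOn_trigDen_mul (hfi : Integrable f) (ha : 0 < a) {η : Fin N → ℝ}
    (hη : ∑ k, |η k| ≤ 1 / (2 * a)) (x : ℝ) :
    IntegrableOn (fun y => trigDen a η y * f (x - y)) (Set.Ioc 0 a) :=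
  integrableOn_cos_mul_comp hfi _ (continuous_trigDen a η) (abs_trigDen_le ha hη) x _

lemma obsDen_nonneg (hf0 : ∀ x, 0 ≤ f x) (ha : 0 < a) {η : Fin N → ℝ}
    (hη : ∑ k, |η k| ≤ 1 / (2 * a)) (x : ℝ) : 0 ≤ obsDen f a η x :=
  integral_nonneg fun y => mul_nonneg (trigDen_pos ha hη y).le (hf0 _)

lemma measurable_obsDen (hfm : Measurable f) (η : Fin N → ℝ) : Measurable (obsDen f a η) := by
  have h : StronglyMeasurable (Function.uncurry fun x y : ℝ => trigDen a η y * f (x - y)) := by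
    refine Measurable.stronglyMeasurable ?_
    have := (continuous_trigDen a η).measurable
    simp only [Function.uncurry_def]
    fun_prop
  exact (h.integral_prod_right (ν := volume.restrict (Set.Ioc 0 a))).measurable

/-- The law of a single observation has density `obsDen`. -/
lemma map_add_trigLaw (hfm : Measurable f) (hfi : Integrable f) (hf0 : ∀ x, 0 ≤ f x)
    (ha : 0 < a) {η : Fin N → ℝ} (hη : ∑ k, |η k| ≤ 1 / (2 * a)) :
    ((trigLaw a η).prod (volume.withDensity fun x => ENNReal.ofReal (f x))).map
      (fun p => p.1 + p.2) = volume.withDensity fun x => ENNReal.ofReal (obsDen f a η x) := by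
  have hm : Measurable fun y => ENNReal.ofReal (trigDen a η y) :=
    (continuous_trigDen a η).measurable.ennreal_ofReal
  change trigLaw a η ∗ volume.withDensity (fun x => ENNReal.ofReal (f x)) = _
  rw [trigLaw, conv_withDensity_eq_lconvolution (hm.indicator measurableSet_Ioc)
    hfm.ennreal_ofReal]
  congr 1
  ext x
  rw [lconvolution_def, obsDen, ofReal_integral_eq_lintegral_ofReal
    (integrableOn_trigDen_mul hfi ha hη x)
    (.of_forall fun y => mul_nonneg (trigDen_pos ha hη y).le (hf0 _)),
    ← lintegral_indicator measurableSet_Ioc]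
  refine lintegral_congr fun y => ?_
  by_cases hy : y ∈ Set.Ioc 0 a
  · simp only [Set.indicator_of_mem hy]
    rw [ENNReal.ofReal_mul (trigDen_pos ha hη y).le, neg_add_eq_sub]
  · simp only [Set.indicator_of_notMem hy, zero_mul]

lemma obsDen_integral (hfm : Measurable f) (hfi : Integrable f) (hf0 : ∀ x, 0 ≤ f x)
    (hf1 : IsProbabilityMeasure (volume.withDensity fun x => ENNReal.ofReal (f x)))
    (ha : 0 < a) {η : Fin N → ℝ} (hη : ∑ k, |η k| ≤ 1 / (2 * a)) :
    Integrable (obsDen f a η) ∧ ∫ x, obsDen f a η x = 1 := by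
  have := isProbabilityMeasure_trigLaw ha hη
  have hmap : IsProbabilityMeasure (((trigLaw a η).prod
      (volume.withDensity fun x => ENNReal.ofReal (f x))).map fun p => p.1 + p.2) :=
    Measure.isProbabilityMeasure_map (by fun_prop)
  rw [map_add_trigLaw hfm hfi hf0 ha hη] at hmap
  have h1 := hmap.measure_univ
  rw [withDensity_apply _ MeasurableSet.univ, Measure.restrict_univ] at h1
  have h0 := obsDen_nonneg hf0 ha hη
  have hm := (measurable_obsDen (a := a) hfm η).aestronglyMeasurable (μ := volume)
  constructor
  · rw [← lintegral_ofReal_ne_top_iff_integrable hm (.of_forall h0), h1]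
    exact ENNReal.one_ne_top
  · rw [integral_eq_lintegral_of_nonneg_ae (.of_forall h0) hm, h1, ENNReal.toReal_one]

lemma obsDen_sub (hfi : Integrable f) (ha : 0 < a) {η η' : Fin N → ℝ}
    (hη : ∑ k, |η k| ≤ 1 / (2 * a)) (hη' : ∑ k, |η' k| ≤ 1 / (2 * a)) {i : Fin N}
    (hi : ∀ k, k ≠ i → η k = η' k) (x : ℝ) :
    obsDen f a η x - obsDen f a η' x = (η i - η' i) *
      ∫ y in Set.Ioc 0 a, Real.cos ((i + 1) * (Real.pi * y / a)) * f (x - y) := by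
  rw [obsDen, obsDen, ← integral_sub (integrableOn_trigDen_mul hfi ha hη x)
    (integrableOn_trigDen_mul hfi ha hη' x), ← integral_const_mul]
  refine integral_congr_ae (.of_forall fun y => ?_)
  have : trigDen a η y - trigDen a η' y =
      (η i - η' i) * Real.cos ((i + 1) * (Real.pi * y / a)) := by
    unfold trigDen
    rw [add_sub_add_left_eq_sub, ← Finset.sum_sub_distrib, Finset.sum_eq_single i]
    · ring
    · intro k _ hk; rw [hi k hk]; ring
    · simp
  simp only
  rw [← sub_mul, this, mul_assoc]

/-- Two observation densities differing in one coefficient: the relative difference is at most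
proportional to the change of the coefficient. -/
lemma abs_obsDen_sub_le (hfi : Integrable f) (hf0 : ∀ x, 0 ≤ f x) (ha : 0 < a)
    {η η' : Fin N → ℝ}
    (hη : ∑ k, |η k| ≤ 1 / (2 * a)) (hη' : ∑ k, |η' k| ≤ 1 / (2 * a)) {i : Fin N}
    (hi : ∀ k, k ≠ i → η k = η' k) (x : ℝ) :
    |obsDen f a η x - obsDen f a η' x| ≤
      |η i - η' i| * a * (obsDen f a η x + obsDen f a η' x) := by
  rw [obsDen_sub hfi ha hη hη' hi, abs_mul, mul_assoc]
  refine mul_le_mul_of_nonneg_left ?_ (abs_nonneg _)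
  have hJi : IntegrableOn (fun y => f (x - y)) (Set.Ioc 0 a) :=
    (hfi.comp_sub_left x).integrableOn
  have hlow : ∀ {η : Fin N → ℝ}, ∑ k, |η k| ≤ 1 / (2 * a) →
      1 / (2 * a) * ∫ y in Set.Ioc 0 a, f (x - y) ≤ obsDen f a η x := by
    intro η hη
    rw [← integral_const_mul]
    exact integral_mono (hJi.const_mul _) (integrableOn_trigDen_mul hfi ha hη x)
      fun y => mul_le_mul_of_nonneg_right (trigDen_lower hη y) (hf0 _)
  have h1 := hlow hη
  have h2 := hlow hη'
  calc |∫ y in Set.Ioc 0 a, Real.cos ((i + 1) * (Real.pi * y / a)) * f (x - y)|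
      ≤ ∫ y in Set.Ioc 0 a, f (x - y) := by
        rw [← Real.norm_eq_abs]
        refine norm_integral_le_of_norm_le hJi (.of_forall fun y => ?_)
        rw [Real.norm_eq_abs, abs_mul, abs_of_nonneg (hf0 _)]
        exact mul_le_of_le_one_left (hf0 _) (Real.abs_cos_le_one _)
    _ = a * (1 / (2 * a) * (∫ y in Set.Ioc 0 a, f (x - y)) +
          1 / (2 * a) * ∫ y in Set.Ioc 0 a, f (x - y)) := by field_simp; ring
    _ ≤ _ := by gcongr

/-- Changing the `i`-th coefficient moves the observation density in `L¹` by only `O(1/(i+1))` times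
the change. -/
lemma integral_abs_obsDen_sub_le (hfi : Integrable f) (hf : BoundedVariationOn f Set.univ)
    (ha : 0 < a) {η η' : Fin N → ℝ}
    (hη : ∑ k, |η k| ≤ 1 / (2 * a)) (hη' : ∑ k, |η' k| ≤ 1 / (2 * a)) {i : Fin N}
    (hi : ∀ k, k ≠ i → η k = η' k) :
    ∫ x, |obsDen f a η x - obsDen f a η' x| ≤
      |η i - η' i| * (a * (a / (i + 1) * (eVariationOn f Set.univ).toReal)) := by
  have hk : (0 : ℝ) < i + 1 := by positivity
  have h := L1_cos_conv hfi hf (τ := a / (i + 1)) (by positivity) (i + 1)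
  have e1 : ((i + 1 : ℕ) : ℝ) * (a / (i + 1)) = a := by push_cast; field_simp
  have e2 : ∀ y : ℝ, Real.pi * y / (a / (i + 1)) = (i + 1) * (Real.pi * y / a) := fun y => by
    field_simp
  simp_rw [e1, e2] at h
  simp_rw [obsDen_sub hfi ha hη hη' hi, abs_mul]
  rw [integral_const_mul]
  refine mul_le_mul_of_nonneg_left ?_ (abs_nonneg _)
  have hm : Measurable fun x =>
      ∫ y in Set.Ioc 0 a, Real.cos ((i + 1) * (Real.pi * y / a)) * f (x - y) := by
    have hs : StronglyMeasurable (Function.uncurry fun x y : ℝ =>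
        Real.cos ((i + 1) * (Real.pi * y / a)) * f (x - y)) := by
      refine Measurable.stronglyMeasurable ?_
      have := measurable_of_bv hf
      simp only [Function.uncurry_def]
      fun_prop
    exact (hs.integral_prod_right (ν := volume.restrict (Set.Ioc 0 a))).measurable
  simp_rw [← Real.norm_eq_abs]
  rw [integral_norm_eq_lintegral_enorm hm.aestronglyMeasurable]
  refine (ENNReal.toReal_mono (by finiteness) h).trans (le_of_eq ?_)
  rw [ENNReal.toReal_mul, ENNReal.toReal_mul, ENNReal.toReal_ofReal ha.le,
    ENNReal.toReal_ofReal (by positivity)]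

end observation

/-! ### Sine coefficients of estimators and averaging over sign patterns -/

lemma isProbabilityMeasure_sampleLaw (μW μδ : Measure ℝ) [IsProbabilityMeasure μW]
    [IsProbabilityMeasure μδ] (n : ℕ) : IsProbabilityMeasure (sampleLaw μW μδ n) := by
  have : IsProbabilityMeasure ((μW.prod μδ).map fun p => p.1 + p.2) :=
    Measure.isProbabilityMeasure_map (by fun_prop)
  unfold sampleLaw
  infer_instance

/-- The two-point bound for two perturbed uniform laws that differ in one coefficient only. -/
lemma two_point_sampleLaw {f : ℝ → ℝ} (hf : BoundedVariationOn f Set.univ) (hfi : Integrable f)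
    (hf0 : ∀ x, 0 ≤ f x)
    (hf1 : IsProbabilityMeasure (volume.withDensity fun x => ENNReal.ofReal (f x)))
    {a : ℝ} (ha : 0 < a) {n N : ℕ} {η η' : Fin N → ℝ}
    (hη : ∑ k, |η k| ≤ 1 / (2 * a)) (hη' : ∑ k, |η' k| ≤ 1 / (2 * a)) {i : Fin N}
    (hi : ∀ k, k ≠ i → η k = η' k)
    (hn : n * ((η i - η' i) ^ 2 * (a ^ 3 / (i + 1) * (eVariationOn f Set.univ).toReal)) ≤ 1)
    {T : (Fin n → ℝ) → ℝ} (hT : Measurable T) (b b' : ℝ) :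
    ENNReal.ofReal ((b - b') ^ 2 / 8) ≤
      (∫⁻ X, ENNReal.ofReal ((T X - b) ^ 2) ∂sampleLaw (trigLaw a η)
        (volume.withDensity fun x => ENNReal.ofReal (f x)) n) +
      ∫⁻ X, ENNReal.ofReal ((T X - b') ^ 2) ∂sampleLaw (trigLaw a η')
        (volume.withDensity fun x => ENNReal.ofReal (f x)) n := by
  have hfm := measurable_of_bv hf
  obtain ⟨hp, hp1⟩ := obsDen_integral hfm hfi hf0 hf1 ha hη
  obtain ⟨hq, hq1⟩ := obsDen_integral hfm hfi hf0 hf1 ha hη'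
  have hp0 := obsDen_nonneg hf0 ha hη
  have hq0 := obsDen_nonneg hf0 ha hη'
  simp only [sampleLaw, map_add_trigLaw hfm hfi hf0 ha hη, map_add_trigLaw hfm hfi hf0 ha hη']
  refine two_point hp0 hq0 (measurable_obsDen hfm η) (measurable_obsDen hfm η') hp hq hp1 hq1
    (affinity_pow hp0 hq0 hp hq hp1 hq1 (κ := |η i - η' i| * a) (by positivity)
      (integral_abs_obsDen_sub_le hfi hf ha hη hη' hi)
      (abs_obsDen_sub_le hfi hf0 ha hη hη' hi) (le_trans (le_of_eq ?_) hn)) hT b b'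
  rw [← sq_abs (η i - η' i)]
  ring

/-- The sine coefficient, on `(0, a]`, of the deviation of `φ` from the uniform distribution
function. -/
def sineCoeff (a : ℝ) (k : ℕ) (φ : ℝ → ℝ) : ℝ :=
  2 / a * ∫ y in Set.Ioc 0 a, (φ y - y / a) * Real.sin ((k + 1) * (Real.pi * y / a))

/-- The integrated squared error of `φ` dominates the sum of the squared errors of its sine
coefficients. -/
lemma sum_sineCoeff_le {a : ℝ} (ha : 0 < a) {N : ℕ} {η : Fin N → ℝ}
    (hη : ∑ k, |η k| ≤ 1 / (2 * a)) {φ : ℝ → ℝ} (hφ : Measurable φ) :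
    ∑ k : Fin N, ENNReal.ofReal (a / 2) * ENNReal.ofReal
        ((sineCoeff a k φ - η k * (a / ((k + 1) * Real.pi))) ^ 2) ≤
      ∫⁻ x, ENNReal.ofReal ((φ x - cdfF (trigLaw a η) x) ^ 2) := by
  set s : Fin N → ℝ → ℝ := fun k y => Real.sin ((k + 1) * (Real.pi * y / a)) with hs
  have hsc : ∀ k, Continuous (s k) := fun k => by simp only [hs]; fun_prop
  set β : Fin N → ℝ := fun k => η k * (a / ((k + 1) * Real.pi)) with hβ
  set g : ℝ → ℝ := fun y => φ y - y / a - ∑ j, β j * s j y with hg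
  have hgm : Measurable g := by
    have := fun k => (hsc k).measurable
    simp only [hg]
    fun_prop
  refine le_trans ?_ (setLIntegral_le_lintegral (Set.Ioc 0 a) _)
  have e : ∫⁻ x in Set.Ioc 0 a, ENNReal.ofReal ((φ x - cdfF (trigLaw a η) x) ^ 2) =
      ∫⁻ x in Set.Ioc 0 a, ENNReal.ofReal (g x ^ 2) := by
    refine setLIntegral_congr_fun measurableSet_Ioc fun x hx => ?_
    simp only [cdfF_trigLaw ha hη hx, hg, hβ, hs]
    congr 2
    ring
  rw [e]
  -- if the loss is infinite there is nothing to show; otherwise `g` is square integrable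
  by_cases htop : ∫⁻ x in Set.Ioc 0 a, ENNReal.ofReal (g x ^ 2) = ⊤
  · rw [htop]; exact le_top
  have hg2 : Integrable (fun x => g x ^ 2) (volume.restrict (Set.Ioc 0 a)) :=
    (lintegral_ofReal_ne_top_iff_integrable (by fun_prop)
      (.of_forall fun x => sq_nonneg _)).1 htop
  have hgi : Integrable g (volume.restrict (Set.Ioc 0 a)) :=
    ((memLp_two_iff_integrable_sq hgm.aestronglyMeasurable).2 hg2).integrable (by norm_num)
  have hcoef : ∀ k : Fin N, 2 / a * ∫ y in Set.Ioc 0 a, g y * s k y =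
      sineCoeff a k φ - β k := by
    intro k
    have hgs : Integrable (fun y => g y * s k y) (volume.restrict (Set.Ioc 0 a)) :=
      hgi.mul_bdd (c := 1) (hsc k).aestronglyMeasurable
        (.of_forall fun y => Real.abs_sin_le_one _)
    have hss : ∀ j, Integrable (fun y => β j * (s j y * s k y))
        (volume.restrict (Set.Ioc 0 a)) := fun j =>
      Integrable.const_mul ((((hsc j).mul (hsc k)).integrableOn_Icc).mono_set
        Set.Ioc_subset_Icc_self) _
    have h1 : ∫ y in Set.Ioc 0 a, (φ y - y / a) * s k y =
        (∫ y in Set.Ioc 0 a, g y * s k y) + β k * (a / 2) := by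
      have h2 : ∀ y, (φ y - y / a) * s k y = g y * s k y + ∑ j, β j * (s j y * s k y) := by
        intro y
        have : ∑ j, β j * (s j y * s k y) = (∑ j, β j * s j y) * s k y := by
          rw [Finset.sum_mul]; exact Finset.sum_congr rfl fun j _ => by ring
        rw [this]; simp only [hg]; ring
      simp_rw [h2]
      rw [integral_add hgs (integrable_finsetSum _ fun j _ => hss j),
        integral_finsetSum _ fun j _ => hss j]
      simp_rw [integral_const_mul]
      congr 1
      rw [Finset.sum_eq_single k]
      · simp only [hs]; rw [integral_sin_mul_sin ha, if_pos rfl]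
      · intro j _ hj
        simp only [hs]
        rw [integral_sin_mul_sin ha, if_neg (fun h => hj (Fin.ext h)), mul_zero]
      · simp
    rw [sineCoeff, h1]
    field_simp
    ring
  have hB := bessel_sin ha N hgm.aestronglyMeasurable hg2
  have h3 : ∀ k : Fin N, 2 / a * ∫ y in Set.Ioc 0 a,
      g y * Real.sin ((k + 1) * (Real.pi * y / a)) = sineCoeff a k φ - β k := hcoef
  simp_rw [h3] at hB
  rw [← ofReal_integral_eq_lintegral_ofReal hg2 (.of_forall fun x => sq_nonneg _)]
  refine le_trans (le_of_eq ?_) (ENNReal.ofReal_le_ofReal hB)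
  rw [ENNReal.ofReal_sum_of_nonneg fun k _ => by positivity]
  exact Finset.sum_congr rfl fun k _ => (ENNReal.ofReal_mul (by positivity)).symm

/-- Assouad's averaging over the vertices of the cube: if flipping the sign `k` always costs
`w k` in the `k`-th component of the risk, some vertex has risk at least half the sum of the
`w k`. -/
lemma assouad {N : ℕ} {r : Fin N → (Fin N → Bool) → ℝ≥0∞} {w : Fin N → ℝ≥0∞} {R : ℝ≥0∞}
    (h1 : ∀ σ, ∑ k, r k σ ≤ R)
    (h2 : ∀ k σ, w k ≤ r k σ + r k (Function.update σ k (!σ k))) : ∑ k, w k ≤ 2 * R := by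
  have hflip : ∀ k, ∑ σ, r k (Function.update σ k (!σ k)) = ∑ σ, r k σ := by
    intro k
    have hinv : Function.Involutive fun σ : Fin N → Bool => Function.update σ k (!σ k) := by
      intro σ; simp
    exact Equiv.sum_comp hinv.toPerm (r k)
  set M : ℝ≥0∞ := ((Fintype.card (Fin N → Bool) : ℕ) : ℝ≥0∞) with hM
  have hM0 : M ≠ 0 := by simp [hM]
  have hMt : M ≠ ⊤ := by simp [hM]
  rw [← ENNReal.mul_le_mul_iff_right hM0 hMt]
  calc M * ∑ k, w k = ∑ k, ∑ _σ : Fin N → Bool, w k := by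
        simp [Finset.mul_sum, hM]
    _ ≤ ∑ k, ∑ σ, (r k σ + r k (Function.update σ k (!σ k))) :=
        Finset.sum_le_sum fun k _ => Finset.sum_le_sum fun σ _ => h2 k σ
    _ = 2 * ∑ σ, ∑ k, r k σ := by
        simp_rw [Finset.sum_add_distrib, hflip]
        rw [Finset.sum_comm, two_mul]
    _ ≤ 2 * ∑ _σ : Fin N → Bool, R := by
        gcongr with σ; exact h1 σ
    _ = M * (2 * R) := by
        simp [hM]; ring

/-- A risk of at most `D/n` over all laws of the class bounds every partial sum of the harmonic
series. The perturbation at frequency `k + 1` has amplitude proportional to `√((k+1)/n)`, the largest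
one that `n` observations cannot detect; for `n` large (depending on `N`) these amplitudes are
admissible. -/
lemma harmonic_le {f : ℝ → ℝ} (hf : BoundedVariationOn f Set.univ) (hfi : Integrable f)
    (hf0 : ∀ x, 0 ≤ f x)
    (hf1 : IsProbabilityMeasure (volume.withDensity fun x => ENNReal.ofReal (f x)))
    {a : ℝ} (ha : 0 < a) (Fhat : (n : ℕ) → (Fin n → ℝ) → ℝ → ℝ)
    (hmeas : ∀ n, Measurable (Function.uncurry (Fhat n))) {D : ℝ} (hD : 0 ≤ D)
    (hrate : ∀ n : ℕ, 1 ≤ n → ∀ μW : Measure ℝ, memG2 a μW →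
      (∫⁻ x : ℝ, riskSq μW (volume.withDensity fun x => ENNReal.ofReal (f x)) n
        (fun X => Fhat n X x) (cdfF μW x)) ≤ ENNReal.ofReal (D / n)) (N : ℕ) :
    ∑ k ∈ Finset.range N, 1 / ((k : ℝ) + 1) ≤
      32 * Real.pi ^ 2 * ((eVariationOn f Set.univ).toReal + 1) * D := by
  set V := (eVariationOn f Set.univ).toReal with hV
  have hV0 : 0 ≤ V := ENNReal.toReal_nonneg
  set μδ := volume.withDensity fun x => ENNReal.ofReal (f x) with hμδ
  -- `t n * √(k+1)` is the amplitude of the perturbation at frequency `k + 1`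
  -- the constant makes the `n`-observation affinity bound `V / (V + 1) ≤ 1`
  set t : ℕ → ℝ := fun n => √(1 / (4 * a ^ 3 * (V + 1) * n)) with ht
  have htlim : Tendsto (fun n => t n * ∑ k : Fin N, √((k : ℝ) + 1)) atTop (𝓝 0) := by
    have h1 : Tendsto (fun n : ℕ => 1 / (4 * a ^ 3 * (V + 1) * (n : ℝ))) atTop (𝓝 0) := by
      refine Tendsto.div_atTop tendsto_const_nhds ?_
      exact tendsto_natCast_atTop_atTop.const_mul_atTop (by positivity)
    have h2 := (h1.sqrt).mul_const (∑ k : Fin N, √((k : ℝ) + 1))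
    rw [Real.sqrt_zero, zero_mul] at h2
    exact h2
  obtain ⟨n, hn, hn1⟩ := ((htlim.eventually_le_const
    (show (0 : ℝ) < 1 / (2 * a) by positivity)).and (eventually_ge_atTop 1)).exists
  have hn0 : (0 : ℝ) < n := by exact_mod_cast hn1
  have ht2 : t n ^ 2 = 1 / (4 * a ^ 3 * (V + 1) * n) := Real.sq_sqrt (by positivity)
  have ht0 : 0 ≤ t n := Real.sqrt_nonneg _
  set η : (Fin N → Bool) → Fin N → ℝ := fun σ k =>
    t n * √((k : ℝ) + 1) * (if σ k then 1 else -1) with hηdef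
  have hη : ∀ σ, ∑ k, |η σ k| ≤ 1 / (2 * a) := by
    intro σ
    refine le_trans (le_of_eq ?_) hn
    rw [Finset.mul_sum]
    refine Finset.sum_congr rfl fun k _ => ?_
    simp only [hηdef]
    rw [abs_mul, abs_of_nonneg (by positivity)]
    split_ifs <;> simp
  have hflip : ∀ σ k, (η σ k - η (Function.update σ k (!σ k)) k) ^ 2 =
      4 * t n ^ 2 * (k + 1) := by
    intro σ k
    have : √((k : ℝ) + 1) ^ 2 = k + 1 := Real.sq_sqrt (by positivity)
    rw [← this]
    simp only [hηdef, Function.update_self]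
    cases σ k <;> simp <;> ring
  have hne : ∀ σ k j, j ≠ k → η σ j = η (Function.update σ k (!σ k)) j := by
    intro σ k j hj
    simp only [hηdef, Function.update_of_ne hj]
  have hTm : ∀ k : ℕ, Measurable fun X : Fin n → ℝ => sineCoeff a k (Fhat n X) := by
    intro k
    have hs : StronglyMeasurable (Function.uncurry fun (X : Fin n → ℝ) (y : ℝ) =>
        (Fhat n X y - y / a) * Real.sin ((k + 1) * (Real.pi * y / a))) := by
      refine Measurable.stronglyMeasurable ?_
      have := hmeas n
      simp only [Function.uncurry_def] at this ⊢
      fun_prop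
    exact (hs.integral_prod_right (ν := volume.restrict (Set.Ioc 0 a))).measurable.const_mul _
  have hprob := fun σ => isProbabilityMeasure_trigLaw ha (hη σ)
  have hsprob := fun σ => isProbabilityMeasure_sampleLaw (trigLaw a (η σ)) μδ n
  have key := assouad (N := N) (R := ENNReal.ofReal (D / n))
    (r := fun k σ => ENNReal.ofReal (a / 2) * ∫⁻ X, ENNReal.ofReal
      ((sineCoeff a k (Fhat n X) - η σ k * (a / ((k + 1) * Real.pi))) ^ 2)
      ∂sampleLaw (trigLaw a (η σ)) μδ n)
    (w := fun k => ENNReal.ofReal (1 / ((k : ℝ) + 1) * (1 / (16 * Real.pi ^ 2 * (V + 1) * n))))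
    ?_ ?_
  · rw [← ENNReal.ofReal_sum_of_nonneg fun k _ => by positivity, ← Finset.sum_mul,
      Fin.sum_univ_eq_sum_range (fun k => 1 / ((k : ℝ) + 1)) N,
      ← ENNReal.ofReal_ofNat, ← ENNReal.ofReal_mul (by norm_num),
      ENNReal.ofReal_le_ofReal_iff (by positivity), mul_one_div, div_le_iff₀ (by positivity)] at key
    refine key.trans (le_of_eq ?_)
    field_simp
    ring
  · intro σ
    refine le_trans ?_ (hrate n hn1 _ (memG2_trigLaw ha (hη σ)))
    have hcdf : Measurable (cdfF (trigLaw a (η σ))) := by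
      refine Monotone.measurable fun x y hxy => ?_
      exact ENNReal.toReal_mono (measure_ne_top _ _) (measure_mono (Set.Iic_subset_Iic.2 hxy))
    have hm : Measurable fun z : ℝ × (Fin n → ℝ) =>
        ENNReal.ofReal ((Fhat n z.2 z.1 - cdfF (trigLaw a (η σ)) z.1) ^ 2) := by
      have h1 : Measurable fun z : ℝ × (Fin n → ℝ) => Fhat n z.2 z.1 :=
        (hmeas n).comp measurable_swap
      fun_prop
    unfold riskSq
    rw [lintegral_lintegral_swap hm.aemeasurable]
    have hT := fun k : Fin N => hTm k
    calc _ = ∫⁻ X, ∑ k : Fin N, ENNReal.ofReal (a / 2) * ENNReal.ofReal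
          ((sineCoeff a k (Fhat n X) - η σ k * (a / ((k + 1) * Real.pi))) ^ 2)
          ∂sampleLaw (trigLaw a (η σ)) μδ n := by
          rw [lintegral_finsetSum _ fun k _ => by fun_prop]
          exact Finset.sum_congr rfl fun k _ => (lintegral_const_mul _ (by fun_prop)).symm
      _ ≤ _ := lintegral_mono fun X =>
          sum_sineCoeff_le ha (hη σ) ((hmeas n).comp measurable_prodMk_left)
  · intro k σ
    have hk : (0 : ℝ) < k + 1 := by positivity
    have h := two_point_sampleLaw hf hfi hf0 hf1 ha (n := n) (hη σ)
      (hη (Function.update σ k (!σ k))) (i := k) (hne σ k) ?_ (hTm k)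
      (η σ k * (a / ((k + 1) * Real.pi)))
      (η (Function.update σ k (!σ k)) k * (a / ((k + 1) * Real.pi)))
    · rw [← mul_add]
      refine le_trans (le_of_eq ?_) (mul_le_mul_right h _)
      rw [← sub_mul, mul_pow, hflip, ht2, ← ENNReal.ofReal_mul (by positivity)]
      congr 1
      field_simp
      norm_num
    · rw [hflip, ht2, ← hV]
      have : (n : ℝ) * (4 * (1 / (4 * a ^ 3 * (V + 1) * n)) * (k + 1) *
          (a ^ 3 / (k + 1) * V)) = V / (V + 1) := by field_simp
      rw [this, div_le_one (by positivity)]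
      linarith

/-! ### Conclusion -/

/-- **Theorem 3.4.** Necessity of the tail condition for root-`n` consistency.
If `f_δ` is of bounded variation, `f_δ^Ft` is nonvanishing and eventually monotone
decreasing, and some sequence of estimators attains mean integrated squared error
`O(n⁻¹)` uniformly over `𝒢₂(C)`, then `∫_1^∞ t⁻² f_δ^Ft(t)⁻² dt < ∞`. -/
theorem tail_condition_necessary_for_root_n
    (μδ : Measure ℝ) [IsProbabilityMeasure μδ] (fδden fδ : ℝ → ℝ)
    (hden : μδ = volume.withDensity fun x => ENNReal.ofReal (fδden x))
    (hBV : BoundedVariationOn fδden Set.univ)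
    (hchar : ∀ t, charFn μδ t = (fδ t : ℂ))
    (hnv : ∀ t, fδ t ≠ 0)
    (hmono : ∃ T : ℝ, 0 < T ∧ AntitoneOn fδ (Set.Ici T))
    (C : ℝ) (hC : 0 < C)
    (Fhat : (n : ℕ) → (Fin n → ℝ) → ℝ → ℝ)
    (hmeas : ∀ n, Measurable (Function.uncurry (Fhat n)))
    (hrate : ∃ D : ℝ, ∀ n : ℕ, 1 ≤ n → ∀ μW : Measure ℝ, memG2 C μW →
      (∫⁻ x : ℝ, riskSq μW μδ n (fun X => Fhat n X x) (cdfF μW x)) ≤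
        ENNReal.ofReal (D / n)) :
    (∫⁻ t in Set.Ioi (1 : ℝ), ENNReal.ofReal (t⁻¹ ^ 2 * ((fδ t)⁻¹) ^ 2)) < ⊤ := by
  exfalso
  obtain ⟨D, hD⟩ := hrate
  -- `fδden` need not be nonnegative, but only its positive part enters `hden`
  set f : ℝ → ℝ := fun x => max (fδden x) 0 with hfdef
  have hf : BoundedVariationOn f Set.univ := bv_max_zero hBV
  have hf0 : ∀ x, 0 ≤ f x := fun x => le_max_right _ _
  have hμ : μδ = volume.withDensity fun x => ENNReal.ofReal (f x) := by
    rw [hden]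
    congr 1
    funext x
    simp [hfdef, ENNReal.ofReal_max]
  have hf1 : IsProbabilityMeasure (volume.withDensity fun x => ENNReal.ofReal (f x)) :=
    hμ ▸ inferInstance
  have hfi : Integrable f := by
    refine (lintegral_ofReal_ne_top_iff_integrable
      (measurable_of_bv hf).aestronglyMeasurable (.of_forall hf0)).1 ?_
    have h := hf1.measure_univ
    rw [withDensity_apply _ MeasurableSet.univ, Measure.restrict_univ] at h
    rw [h]
    exact ENNReal.one_ne_top
  have hbd := harmonic_le hf hfi hf0 hf1 hC Fhat hmeas (abs_nonneg D) fun n hn μW hW => by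
    rw [← hμ]
    refine (hD n hn μW hW).trans (ENNReal.ofReal_le_ofReal ?_)
    gcongr
    exact le_abs_self D
  obtain ⟨N, hN⟩ := (Real.tendsto_sum_range_one_div_nat_succ_atTop.eventually_gt_atTop
    (32 * Real.pi ^ 2 * ((eVariationOn f Set.univ).toReal + 1) * |D|)).exists
  exact absurd (hbd N) (not_le.2 hN)

end
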